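/- There exists a constant c > 0 such that for all t ≥ 2, the (two-colour) on-line Ramsey number of the complete bipartite graph K_{t,t} satisfies r̃(K_{t,t}) ≤ c · 2^t · t^{5/2} · (log t)^{1/2}, where log denotes the logarithm to the base 2. -/

import Mathlib

/-- A monochromatic clique of size `k` in colour `i` for an edge-colouring `c` of `K_n`. -/
def monoClique {n q : ℕ} (c : Sym2 (Fin n) → Fin q) (i : Fin q) (k : ℕ) : Prop :=
  ∃ A : Finset (Fin n), A.card = k ∧ ∀ u ∈ A, ∀ v ∈ A, u ≠ v → c s(u, v) = i

/-- The `q`-colour Ramsey number `r(k 0, …, k (q-1))`. -/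
noncomputable def ramseyQ {q : ℕ} (k : Fin q → ℕ) : ℕ :=
  sInf {n : ℕ | ∀ c : Sym2 (Fin n) → Fin q, ∃ i : Fin q, monoClique c i (k i)}

/-- The two-colour Ramsey number `r(s, t)`. -/
noncomputable def ramsey2 (s t : ℕ) : ℕ := ramseyQ ![s, t]

/-- A history in the on-line Ramsey game: the previously presented edges with their colours. -/
abbrev History (q : ℕ) := List (Sym2 ℕ × Fin q)

/-- A Builder strategy is valid if it always presents a genuine new edge. -/
def validBuilder {q : ℕ} (B : History q → Sym2 ℕ) : Prop :=
  ∀ h : History q, ¬ (B h).IsDiag ∧ B h ∉ h.map Prod.fst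

/-- The play determined by a Builder strategy `B` and a Painter strategy `P`:
`play B P n` is the history after `n` rounds. -/
def play {q : ℕ} (B : History q → Sym2 ℕ) (P : History q → Sym2 ℕ → Fin q) : ℕ → History q
  | 0 => []
  | n + 1 =>
      let h := play B P n
      h ++ [(B h, P h (B h))]

/-- The graph formed by the edges of colour `i` in a history. -/
def colourGraph {q : ℕ} (h : History q) (i : Fin q) : SimpleGraph ℕ :=
  SimpleGraph.fromEdgeSet {e | (e, i) ∈ h}

/-- `H` contains a copy of `G` as a subgraph. -/
def containsCopy {V : Type*} (G : SimpleGraph V) (H : SimpleGraph ℕ) : Prop :=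
  ∃ f : V → ℕ, Function.Injective f ∧ ∀ u v, G.Adj u v → H.Adj (f u) (f v)

/-- The `q`-colour on-line Ramsey number of `G`: the least `N` such that Builder has a
valid strategy forcing, against every Painter strategy, a monochromatic copy of `G`
within at most `N` rounds. -/
noncomputable def onlineRamsey {V : Type*} (q : ℕ) (G : SimpleGraph V) : ℕ :=
  sInf {N : ℕ | ∃ B : History q → Sym2 ℕ, validBuilder B ∧
    ∀ P : History q → Sym2 ℕ → Fin q,
      ∃ n ≤ N, ∃ i : Fin q, containsCopy G (colourGraph (play B P n) i)}

/-!
Fix disjoint vertex sets `U`, `A`, `V` with `2r`, `4t²` and `2m · 4^r` vertices. Builder first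
presents all edges between `U` and `V`. By pigeonhole, `2m` vertices `W` of `V` see `U` in the same
colour pattern, and `r` vertices `R` of `U` are joined to all of `W` in a single colour, say red.
Builder then presents all edges between `A` and `W`. Because of the head start `R`, a red `K_{t,t}`
only needs `t - r` further vertices in `A`, so the red degree threshold can be lowered, and the
blue one raised, by a factor `1 ± r log 2 / (2t)` from the even split `2t²`; the Kővári–Sós–Turán
count then succeeds in either colour with `m` of order `t · 2^(t - r/2)`. Taking `r = 2k` with
`4^k` about `t / log t` makes the first phase no more expensive than the second, whose cost is
`8t² m`, of order `2^t t^3 / 2^k`.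
-/

section BipartiteCounting

open Finset SimpleGraph

variable {V : Type*}

theorem choose_le_mul_choose_of_pow_le {a c d s : ℕ} (h : a ^ s ≤ c * (d - s) ^ s) :
    a.choose s ≤ c * d.choose s := by
  refine Nat.le_of_mul_le_mul_left ?_ s.factorial_pos
  calc s.factorial * a.choose s = a.descFactorial s :=
        (Nat.descFactorial_eq_factorial_mul_choose a s).symm
    _ ≤ a ^ s := Nat.descFactorial_le_pow a s
    _ ≤ c * (d - s) ^ s := h
    _ ≤ c * (d + 1 - s) ^ s := by gcongr; exact d.le_succ
    _ ≤ c * d.descFactorial s := by gcongr; exact Nat.pow_sub_le_descFactorial d s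
    _ = s.factorial * (c * d.choose s) := by
      rw [Nat.descFactorial_eq_factorial_mul_choose, mul_left_comm]

/-- Double counting of stars, as in the Kővári–Sós–Turán theorem. -/
theorem exists_isCompleteBetween_of_le_degree {G : SimpleGraph V} [DecidableRel G.Adj]
    {A W : Finset V} {d s t : ℕ} (hs : s ≤ #A) (hd : ∀ v ∈ W, d ≤ #{u ∈ A | G.Adj u v})
    (ht : t * (#A).choose s ≤ #W * d.choose s) :
    ∃ S ⊆ A, ∃ T ⊆ W, #S = s ∧ #T = t ∧ G.IsCompleteBetween S T := by
  classical
  have star_count : ∀ v ∈ W, d.choose s ≤ #{S ∈ A.powersetCard s | ∀ u ∈ S, G.Adj u v} := by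
    intro v hv
    calc d.choose s ≤ (#{u ∈ A | G.Adj u v}).choose s := Nat.choose_le_choose s (hd v hv)
      _ = #({u ∈ A | G.Adj u v}.powersetCard s) := (card_powersetCard s _).symm
      _ ≤ _ := card_le_card fun S hS ↦ by
        simp only [mem_powersetCard, mem_filter, subset_iff] at hS ⊢
        exact ⟨⟨fun u hu ↦ (hS.1 hu).1, hS.2⟩, fun u hu ↦ (hS.1 hu).2⟩
  have average : ∑ _S ∈ A.powersetCard s, t ≤
      ∑ S ∈ A.powersetCard s, #{v ∈ W | ∀ u ∈ S, G.Adj u v} :=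
    calc ∑ _S ∈ A.powersetCard s, t = t * (#A).choose s := by
          rw [sum_const, card_powersetCard, smul_eq_mul, mul_comm]
      _ ≤ #W * d.choose s := ht
      _ = ∑ _v ∈ W, d.choose s := by rw [sum_const, smul_eq_mul]
      _ ≤ ∑ v ∈ W, #{S ∈ A.powersetCard s | ∀ u ∈ S, G.Adj u v} := sum_le_sum star_count
      _ = _ := (sum_card_bipartiteAbove_eq_sum_card_bipartiteBelow
          (fun (S : Finset V) v ↦ ∀ u ∈ S, G.Adj u v)).symm
  obtain ⟨S, hS, htS⟩ := exists_le_of_sum_le (powersetCard_nonempty.2 hs) average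
  obtain ⟨T, hT, hTt⟩ := exists_subset_card_eq htS
  rw [mem_powersetCard] at hS
  exact ⟨S, hS.1, T, hT.trans (filter_subset _ _), hS.2, hTt,
    fun u hu v hv ↦ (mem_filter.1 (hT hv)).2 u hu⟩

theorem exists_isCompleteBetween_of_iSup {ι : Type*} [Fintype ι] [Nonempty ι]
    {G : ι → SimpleGraph V} {A B : Finset V} {r m : ℕ}
    (hG : (⨆ i, G i).IsCompleteBetween A B) (hA : Fintype.card ι * r ≤ #A)
    (hB : Fintype.card ι ^ #A * m ≤ #B) :
    ∃ i, ∃ R ⊆ A, ∃ W ⊆ B, #R = r ∧ #W = m ∧ (G i).IsCompleteBetween R W := by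
  classical
  have exists_colour : ∀ u ∈ A, ∀ v ∈ B, ∃ i, (G i).Adj u v :=
    fun u hu v hv ↦ iSup_adj.1 (hG hu hv)
  choose! colour hcolour using exists_colour
  let pattern (v : V) : A → ι := fun u ↦ colour u v
  obtain ⟨p, -, hp⟩ := exists_le_card_fiber_of_mul_le_card_of_maps_to (f := pattern)
    (fun _ _ ↦ mem_univ _) univ_nonempty (by simpa using hB)
  obtain ⟨i, -, hi⟩ := exists_le_card_fiber_of_mul_le_card_of_maps_to (f := p)
    (s := univ) (n := r) (fun _ _ ↦ mem_univ _) univ_nonempty (by simpa using hA)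
  obtain ⟨R, hR, hRr⟩ := exists_subset_card_eq hi
  obtain ⟨W, hW, hWm⟩ := exists_subset_card_eq hp
  refine ⟨i, R.map (.subtype _), map_subtype_subset R, W, hW.trans (filter_subset _ _),
    by rwa [card_map], hWm, fun u hu v hv ↦ ?_⟩
  obtain ⟨u, huR, rfl⟩ := mem_map.1 hu
  obtain ⟨hvB, hvp⟩ := mem_filter.1 (hW hv)
  have hcol : colour u v = i := (congrFun hvp u).trans (mem_filter.1 (hR huR)).2
  exact hcol ▸ hcolour u u.2 v hvB

theorem completeBipartiteGraph_isContained_or {G₁ G₂ : SimpleGraph V} {A R W : Finset V}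
    {t m d₁ d₂ : ℕ} (hRA : Disjoint R A) (hR : #R ≤ t) (hA : t ≤ #A) (hd : d₁ + d₂ ≤ #A)
    (hW : 2 * m ≤ #W) (hRW : G₁.IsCompleteBetween R W) (hAW : (G₁ ⊔ G₂).IsCompleteBetween A W)
    (h₁ : t * (#A).choose (t - #R) ≤ m * d₁.choose (t - #R))
    (h₂ : t * (#A).choose t ≤ m * d₂.choose t) :
    (completeBipartiteGraph (Fin t) (Fin t)).IsContained G₁ ∨
      (completeBipartiteGraph (Fin t) (Fin t)).IsContained G₂ := by
  classical
  simp only [completeBipartiteGraph_isContained_iff, Fintype.card_fin]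
  let rich : Finset V := {v ∈ W | d₁ ≤ #{u ∈ A | G₁.Adj u v}}
  let poor : Finset V := {v ∈ W | ¬ d₁ ≤ #{u ∈ A | G₁.Adj u v}}
  have hsplit : #rich + #poor = #W := card_filter_add_card_filter_not _
  rcases (by omega : m ≤ #rich ∨ m ≤ #poor) with hrich | hpoor
  · obtain ⟨S, hSA, T, hTW, hS, hT, hST⟩ := exists_isCompleteBetween_of_le_degree
      (G := G₁) (W := rich) (by omega) (fun v hv ↦ (mem_filter.1 hv).2)
      (h₁.trans (Nat.mul_le_mul_right _ hrich))
    refine .inl ⟨R ∪ S, T, ?_, hT, fun u hu v hv ↦ ?_⟩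
    · rw [card_union_of_disjoint (hRA.mono_right hSA)]
      omega
    · rcases mem_union.1 hu with hu | hu
      · exact hRW hu (mem_filter.1 (hTW hv)).1
      · exact hST hu hv
  · have poor_degree : ∀ v ∈ poor, d₂ ≤ #{u ∈ A | G₂.Adj u v} := by
      intro v hv
      obtain ⟨hvW, hv⟩ := mem_filter.1 hv
      have hcover : A ⊆ {u ∈ A | G₁.Adj u v} ∪ {u ∈ A | G₂.Adj u v} := fun u hu ↦ by
        rw [← filter_or]
        exact mem_filter.2 ⟨hu, hAW hu hvW⟩
      have := (card_le_card hcover).trans (card_union_le _ _)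
      omega
    obtain ⟨S, -, T, -, hS, hT, hST⟩ := exists_isCompleteBetween_of_le_degree
      hA poor_degree (h₂.trans (Nat.mul_le_mul_right _ hpoor))
    exact .inr ⟨S, T, hS, hT, hST⟩

end BipartiteCounting

section Game

open Finset SimpleGraph

variable {q : ℕ}

/-- `BuilderForces Q n h`: from the history `h`, Builder can reach a history satisfying `Q` within
`n` further rounds, whatever Painter does. Unlike a Builder strategy, which is a function on all
histories, this notion of forcing can be composed. -/
inductive BuilderForces (Q : History q → Prop) : ℕ → History q → Prop
  | reached {n : ℕ} {h : History q} (hQ : Q h) : BuilderForces Q n h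
  | round {n : ℕ} {h : History q} {e : Sym2 ℕ} (hdiag : ¬ e.IsDiag) (hnew : e ∉ h.map Prod.fst)
      (hnext : ∀ c, BuilderForces Q n (h ++ [(e, c)])) : BuilderForces Q (n + 1) h

namespace BuilderForces

variable {Q Q' : History q → Prop} {m n : ℕ} {h : History q}

theorem mono (hQ : BuilderForces Q n h) (hnm : n ≤ m) : BuilderForces Q m h := by
  induction hQ generalizing m with
  | reached hQ => exact .reached hQ
  | round hdiag hnew _ ih =>
    obtain ⟨m, rfl⟩ := Nat.exists_eq_add_of_le' (Nat.one_le_of_lt hnm)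
    exact .round hdiag hnew fun c ↦ ih c (Nat.le_of_succ_le_succ hnm)

theorem trans (hQ : BuilderForces Q n h) (hQ' : ∀ h, Q h → BuilderForces Q' m h) :
    BuilderForces Q' (n + m) h := by
  induction hQ with
  | reached hQ => exact (hQ' _ hQ).mono (Nat.le_add_left _ _)
  | round hdiag hnew _ ih =>
    rw [Nat.add_right_comm]
    exact .round hdiag hnew ih

theorem imp (hQ : BuilderForces Q n h) (hQ' : ∀ h, Q h → Q' h) : BuilderForces Q' n h :=
  hQ.trans (m := 0) fun h hQh ↦ .reached (hQ' h hQh)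

end BuilderForces

theorem exists_notMem_history (h : History q) : ∃ e : Sym2 ℕ, ¬ e.IsDiag ∧ e ∉ h.map Prod.fst := by
  have hinj : Function.Injective fun n : ℕ ↦ s(n, n + 1) := fun a b hab ↦ by
    simp only [Sym2.eq_iff] at hab
    omega
  obtain ⟨_, ⟨n, rfl⟩, hn⟩ :=
    (Set.infinite_range_of_injective hinj).exists_notMem_finset (h.map Prod.fst).toFinset
  exact ⟨s(n, n + 1), by simp, by simpa using hn⟩

/-- Playing for the quickest win makes one edge optimal for all round budgets at once. -/
theorem exists_optimal_edge (Q : History q → Prop) (h : History q) :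
    ∃ e : Sym2 ℕ, (¬ e.IsDiag ∧ e ∉ h.map Prod.fst) ∧
      ∀ n, BuilderForces Q (n + 1) h → ¬ Q h → ∀ c, BuilderForces Q n (h ++ [(e, c)]) := by
  classical
  by_cases H : ∃ n, ∃ e : Sym2 ℕ, (¬ e.IsDiag ∧ e ∉ h.map Prod.fst) ∧
      ∀ c, BuilderForces Q n (h ++ [(e, c)])
  · obtain ⟨e, he, hforce⟩ := Nat.find_spec H
    refine ⟨e, he, fun n hn hQ c ↦ (hforce c).mono (Nat.find_min' H ?_)⟩
    cases hn with
    | reached hQ' => exact absurd hQ' hQ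
    | round hdiag hnew hnext => exact ⟨_, ⟨hdiag, hnew⟩, hnext⟩
  · obtain ⟨e, he⟩ := exists_notMem_history h
    refine ⟨e, he, fun n hn hQ ↦ absurd ?_ H⟩
    cases hn with
    | reached hQ' => exact absurd hQ' hQ
    | round hdiag hnew hnext => exact ⟨n, _, ⟨hdiag, hnew⟩, hnext⟩

theorem BuilderForces.exists_validBuilder {Q : History q → Prop} {N : ℕ}
    (hQ : BuilderForces Q N []) :
    ∃ B : History q → Sym2 ℕ, validBuilder B ∧ ∀ P, ∃ n ≤ N, Q (play B P n) := by
  choose B hB hforce using exists_optimal_edge Q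
  refine ⟨B, hB, fun P ↦ ?_⟩
  by_contra! hne
  have remaining : ∀ n m, n + m = N → BuilderForces Q m (play B P n) := by
    intro n
    induction n with
    | zero => rintro m rfl; simpa [play] using hQ
    | succ n ih =>
      intro m hm
      exact hforce _ m (ih (m + 1) (by omega)) (hne n (by omega)) _
  cases remaining N 0 (add_zero N) with
  | reached hQN => exact hne N le_rfl hQN

theorem containsCopy_iff_isContained {V : Type*} {G : SimpleGraph V} {H : SimpleGraph ℕ} :
    containsCopy G H ↔ G.IsContained H :=
  ⟨fun ⟨f, hf, hadj⟩ ↦ ⟨⟨⟨f, hadj _ _⟩, hf⟩⟩, fun ⟨f⟩ ↦ ⟨f, f.injective, fun _ _ ↦ f.toHom.map_adj⟩⟩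

theorem onlineRamsey_le_of_builderForces {V : Type*} {G : SimpleGraph V} {N : ℕ}
    (hG : BuilderForces (fun h : History q ↦ ∃ i, G.IsContained (colourGraph h i)) N []) :
    onlineRamsey q G ≤ N := by
  simp only [← containsCopy_iff_isContained] at hG
  exact Nat.sInf_le hG.exists_validBuilder

theorem colourGraph_mono {h h' : History q} (hh : h ⊆ h') (i : Fin q) :
    colourGraph h i ≤ colourGraph h' i :=
  fromEdgeSet_mono fun _ he ↦ hh he

theorem iSup_colourGraph_adj {h : History q} {u v : ℕ} :
    (⨆ i, colourGraph h i).Adj u v ↔ s(u, v) ∈ h.map Prod.fst ∧ u ≠ v := by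
  simp [colourGraph]

theorem builderForces_presented (E : Finset (Sym2 ℕ)) (hE : ∀ e ∈ E, ¬ e.IsDiag) (h : History q) :
    BuilderForces (fun h' ↦ h ⊆ h' ∧ ∀ e ∈ E, e ∈ h'.map Prod.fst) #E h := by
  induction E using Finset.induction_on with
  | empty => exact .reached ⟨List.Subset.refl h, by simp⟩
  | insert e E heE ih =>
    rw [forall_mem_insert] at hE
    rw [card_insert_of_notMem heE]
    refine (ih hE.2).trans fun h₁ ⟨hh₁, hE₁⟩ ↦ ?_
    by_cases he : e ∈ h₁.map Prod.fst
    · exact .reached ⟨hh₁, (forall_mem_insert _ _ _).2 ⟨he, hE₁⟩⟩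
    · refine .round hE.1 he fun c ↦ .reached ⟨List.subset_append_of_subset_left _ hh₁, ?_⟩
      rw [List.map_append]
      exact (forall_mem_insert _ _ _).2 ⟨by simp, fun e he ↦ List.mem_append_left _ (hE₁ e he)⟩

theorem builderForces_isCompleteBetween {A B : Finset ℕ} (hAB : Disjoint A B) (h : History q) :
    BuilderForces (fun h' ↦ h ⊆ h' ∧ (⨆ i, colourGraph h' i).IsCompleteBetween A B)
      (#A * #B) h := by
  let E := (A ×ˢ B).image fun p ↦ s(p.1, p.2)
  have hE : ∀ e ∈ E, ¬ e.IsDiag := by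
    simp only [E, mem_image, mem_product, Prod.exists]
    rintro _ ⟨u, v, ⟨hu, hv⟩, rfl⟩
    exact disjoint_iff_ne.1 hAB u hu v hv
  rw [← card_product]
  refine ((builderForces_presented E hE h).imp fun h' ⟨hh', hE'⟩ ↦
    ⟨hh', fun u hu v hv ↦ ?_⟩).mono card_image_le
  exact iSup_colourGraph_adj.2 ⟨hE' _ (mem_image_of_mem _ (mk_mem_product hu hv)),
    disjoint_iff_ne.1 hAB u hu v hv⟩

theorem iSup_fin_two_le_sup_rev {α : Type*} [CompleteLattice α] (f : Fin 2 → α) (i : Fin 2) :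
    ⨆ j, f j ≤ f i ⊔ f i.rev := by
  refine iSup_le fun j ↦ ?_
  rcases (by decide +revert : j = i ∨ j = i.rev) with rfl | rfl
  exacts [le_sup_left, le_sup_right]

theorem exists_disjoint_finsets (a b c : ℕ) :
    ∃ A B C : Finset ℕ, #A = a ∧ #B = b ∧ #C = c ∧ Disjoint A B ∧ Disjoint A C ∧ Disjoint B C := by
  refine ⟨Ico 0 a, Ico a (a + b), Ico (a + b) (a + b + c), by simp, by simp, by simp,
    Ico_disjoint_Ico_consecutive _ _ _, ?_, Ico_disjoint_Ico_consecutive _ _ _⟩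
  exact (Ico_disjoint_Ico_consecutive 0 (a + b) _).mono_left (Ico_subset_Ico_right (by omega))

theorem onlineRamsey_completeBipartiteGraph_le {t r a m d₁ d₂ : ℕ} (hr : r ≤ t) (ha : t ≤ a)
    (hd : d₁ + d₂ ≤ a) (h₁ : t * a.choose (t - r) ≤ m * d₁.choose (t - r))
    (h₂ : t * a.choose t ≤ m * d₂.choose t) :
    onlineRamsey 2 (completeBipartiteGraph (Fin t) (Fin t)) ≤
      2 * r * (4 ^ r * (2 * m)) + a * (2 * m) := by
  obtain ⟨U, A, V, hU, rfl, hV, hUA, hUV, hAV⟩ :=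
    exists_disjoint_finsets (2 * r) a (4 ^ r * (2 * m))
  rw [← hU, ← hV]
  refine onlineRamsey_le_of_builderForces
    ((builderForces_isCompleteBetween hUV []).trans fun h ⟨_, hpresented⟩ ↦ ?_)
  obtain ⟨i, R, hRU, W, hWV, rfl, hW, hRW⟩ := exists_isCompleteBetween_of_iSup (r := r)
    (m := 2 * m) hpresented (by simp [hU]) (by simp [hU, hV, pow_mul])
  rw [← hW]
  refine (builderForces_isCompleteBetween (hAV.mono_right hWV) h).imp
    fun h' ⟨hh', hAW⟩ ↦ ?_
  have hRW' : (colourGraph h' i).IsCompleteBetween R W :=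
    fun u hu v hv ↦ colourGraph_mono hh' i (hRW hu hv)
  have hAW' : (colourGraph h' i ⊔ colourGraph h' i.rev).IsCompleteBetween A W :=
    fun u hu v hv ↦ iSup_fin_two_le_sup_rev (colourGraph h') i (hAW hu hv)
  rcases completeBipartiteGraph_isContained_or (hUA.mono_left hRU) hr ha hd hW.ge hRW' hAW' h₁ h₂
    with hi | hi
  exacts [⟨i, hi⟩, ⟨i.rev, hi⟩]

end Game

section Estimates

theorem exp_sub_two_mul_sq_le_one_add {x : ℝ} (hx : -(1 / 2) ≤ x) :
    Real.exp (x - 2 * x ^ 2) ≤ 1 + x := by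
  have hpos : 0 < 1 + x := by linarith
  rw [← Real.le_log_iff_exp_le hpos]
  calc x - 2 * x ^ 2 ≤ x / (1 + x) := by
        rw [le_div_iff₀ hpos]
        nlinarith [mul_nonneg (sq_nonneg x) (by linarith : 0 ≤ 1 + 2 * x)]
    _ = 1 - (1 + x)⁻¹ := by field_simp; ring
    _ ≤ Real.log (1 + x) := Real.one_sub_inv_le_log_of_pos hpos

variable {t k : ℕ} {σ : ℝ}

theorem one_half_le_one_add_div (hσ : |σ| ≤ k) (hk : 2 * (k + 1) ≤ t) :
    1 / 2 ≤ 1 + (σ - 1) / t := by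
  have ht : (0 : ℝ) < t := by exact_mod_cast (by omega : 0 < t)
  have hkt : 2 * ((k : ℝ) + 1) ≤ t := by exact_mod_cast hk
  have : -(1 / 2) ≤ (σ - 1) / t := by
    rw [le_div_iff₀ ht]
    linarith [(abs_le.1 hσ).1]
  linarith

theorem exp_sub_three_le_pow (hσ : |σ| ≤ k) (hk : 2 * (k + 1) ≤ t) (hk' : (k + 1) ^ 2 ≤ t) :
    Real.exp (σ - 3) ≤ (1 + (σ - 1) / t) ^ t := by
  have ht : (0 : ℝ) < t := by exact_mod_cast (by omega : 0 < t)
  have hhalf := one_half_le_one_add_div hσ hk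
  set x : ℝ := (σ - 1) / t
  have htx : t * x = σ - 1 := mul_div_cancel₀ _ ht.ne'
  have htx2 : t * x ^ 2 ≤ 1 := by
    refine le_of_mul_le_mul_left ?_ ht
    calc t * (t * x ^ 2) = (σ - 1) ^ 2 := by rw [← htx]; ring
      _ ≤ ((k : ℝ) + 1) ^ 2 := by
        obtain ⟨hlower, hupper⟩ := abs_le.1 hσ
        exact sq_le_sq' (by linarith) (by linarith)
      _ ≤ t * 1 := by rw [mul_one]; exact_mod_cast hk'
  calc Real.exp (σ - 3) ≤ Real.exp (t * (x - 2 * x ^ 2)) := by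
        gcongr
        linarith
    _ = Real.exp (x - 2 * x ^ 2) ^ t := Real.exp_nat_mul _ _
    _ ≤ (1 + x) ^ t := by
        gcongr
        exact exp_sub_two_mul_sq_le_one_add (by linarith)

theorem exp_three_le : Real.exp 3 ≤ 27 :=
  calc Real.exp 3 = Real.exp 1 ^ 3 := by rw [← Real.exp_nat_mul]; norm_num
    _ ≤ 3 ^ 3 := by gcongr; exact Real.exp_one_lt_three.le
    _ = 27 := by norm_num

theorem four_mul_sq_pow_le {s : ℕ} (hσ : |σ| ≤ k) (hk : 2 * (k + 1) ≤ t) (hk' : (k + 1) ^ 2 ≤ t)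
    (hs : s ≤ t) (hsσ : s = t ∨ σ ≤ 0) (hpow : (2 : ℝ) ^ s ≤ 2 ^ (t - k) * Real.exp σ) :
    (4 * (t : ℝ) ^ 2) ^ s ≤ 27 * 2 ^ (t - k) * (2 * t ^ 2 * (1 + (σ - 1) / t)) ^ s := by
  have hhalf := one_half_le_one_add_div hσ hk
  have hexp : Real.exp (σ - 3) ≤ (1 + (σ - 1) / t) ^ s := by
    refine (exp_sub_three_le_pow hσ hk hk').trans ?_
    rcases hsσ with rfl | hσ0
    · rfl
    · have hneg : (σ - 1) / t ≤ 0 :=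
        div_nonpos_of_nonpos_of_nonneg (by linarith) t.cast_nonneg
      exact pow_le_pow_of_le_one (by linarith) (by linarith) hs
  calc (4 * (t : ℝ) ^ 2) ^ s = 2 ^ s * (2 * t ^ 2) ^ s := by rw [← mul_pow]; ring
    _ ≤ 2 ^ (t - k) * Real.exp σ * (2 * t ^ 2) ^ s := by gcongr
    _ = 2 ^ (t - k) * (Real.exp 3 * Real.exp (σ - 3)) * (2 * t ^ 2) ^ s := by
      rw [← Real.exp_add, add_sub_cancel]
    _ ≤ 2 ^ (t - k) * (27 * (1 + (σ - 1) / t) ^ s) * (2 * t ^ 2) ^ s := by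
      gcongr
      exact exp_three_le
    _ = 27 * 2 ^ (t - k) * (2 * t ^ 2 * (1 + (σ - 1) / t)) ^ s := by
      rw [mul_pow (2 * (t : ℝ) ^ 2) _ s]
      ring

theorem two_mul_sq_mul_le_natFloor_sub {s : ℕ} (ht : 0 < t) (hs : s ≤ t) :
    2 * t ^ 2 * (1 + (σ - 1) / t) ≤ ((⌊2 * t ^ 2 + 2 * t * σ⌋₊ - s : ℕ) : ℝ) := by
  set d : ℕ := ⌊2 * t ^ 2 + 2 * t * σ⌋₊
  have ht' : (1 : ℝ) ≤ t := by exact_mod_cast ht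
  have hfloor : 2 * t ^ 2 + 2 * t * σ < d + 1 := Nat.lt_floor_add_one _
  have hsub : (d : ℝ) ≤ (d - s : ℕ) + s := by exact_mod_cast le_tsub_add
  have hst : (s : ℝ) ≤ t := by exact_mod_cast hs
  calc 2 * t ^ 2 * (1 + (σ - 1) / t) = 2 * t ^ 2 + 2 * t * σ - 2 * t := by field_simp; ring
    _ ≤ ((d - s : ℕ) : ℝ) := by linarith

theorem choose_four_mul_sq_le {s : ℕ} (hσ : |σ| ≤ k) (hk : 2 * (k + 1) ≤ t)
    (hk' : (k + 1) ^ 2 ≤ t) (hs : s ≤ t) (hsσ : s = t ∨ σ ≤ 0)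
    (hpow : (2 : ℝ) ^ s ≤ 2 ^ (t - k) * Real.exp σ) :
    (4 * t ^ 2).choose s ≤ 27 * 2 ^ (t - k) * (⌊2 * t ^ 2 + 2 * t * σ⌋₊).choose s := by
  apply choose_le_mul_choose_of_pow_le
  have hhalf := one_half_le_one_add_div hσ hk
  have hreal : (4 * (t : ℝ) ^ 2) ^ s ≤
      27 * 2 ^ (t - k) * ((⌊2 * t ^ 2 + 2 * t * σ⌋₊ - s : ℕ) : ℝ) ^ s := by
    refine (four_mul_sq_pow_le hσ hk hk' hs hsσ hpow).trans ?_
    gcongr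
    exact two_mul_sq_mul_le_natFloor_sub (by omega) hs
  exact_mod_cast hreal

theorem succ_sq_le_of_four_pow_le (hk : 4 ^ k ≤ t) : (k + 1) ^ 2 ≤ t :=
  calc (k + 1) ^ 2 ≤ (2 ^ k) ^ 2 := by gcongr; exact Nat.lt_two_pow_self
    _ = 4 ^ k := by rw [← pow_mul, mul_comm, pow_mul]; norm_num
    _ ≤ t := hk

theorem natFloor_add_natFloor_le (hσ : |σ| ≤ t) :
    ⌊2 * t ^ 2 + 2 * t * -σ⌋₊ + ⌊2 * t ^ 2 + 2 * t * σ⌋₊ ≤ 4 * t ^ 2 := by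
  obtain ⟨hlower, hupper⟩ := abs_le.1 hσ
  have hneg : (⌊2 * t ^ 2 + 2 * t * -σ⌋₊ : ℝ) ≤ 2 * t ^ 2 + 2 * t * -σ :=
    Nat.floor_le (by nlinarith)
  have hpos : (⌊2 * t ^ 2 + 2 * t * σ⌋₊ : ℝ) ≤ 2 * t ^ 2 + 2 * t * σ :=
    Nat.floor_le (by nlinarith)
  rify
  linarith

theorem onlineRamsey_completeBipartiteGraph_le_of_four_pow_le (ht : 2 ≤ t) (hk : 4 ^ k ≤ t)
    (hcost : k * 16 ^ k ≤ t ^ 2) :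
    onlineRamsey 2 (completeBipartiteGraph (Fin t) (Fin t)) ≤ 432 * t ^ 3 * 2 ^ (t - k) := by
  have hsq : (k + 1) ^ 2 ≤ t := succ_sq_le_of_four_pow_le hk
  have hlin : 2 * (k + 1) ≤ t := by
    rcases k.eq_zero_or_pos with rfl | hk0
    · exact ht
    · nlinarith
  set L : ℝ := k * Real.log 2 with hL
  have hL0 : 0 ≤ L := by positivity
  have hLk : |L| ≤ k := by
    rw [abs_of_nonneg hL0]
    exact mul_le_of_le_one_right k.cast_nonneg (by linarith [Real.log_two_lt_d9])
  have hexpL : Real.exp L = 2 ^ k := by rw [hL, Real.exp_nat_mul, Real.exp_log two_pos]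
  have hred : (2 : ℝ) ^ (t - 2 * k) = 2 ^ (t - k) * Real.exp (-L) := by
    rw [Real.exp_neg, hexpL, eq_mul_inv_iff_mul_eq₀ (by positivity), ← pow_add]
    congr 1
    omega
  have hblue : (2 : ℝ) ^ t = 2 ^ (t - k) * Real.exp L := by
    rw [hexpL, ← pow_add, Nat.sub_add_cancel (by omega)]
  calc onlineRamsey 2 (completeBipartiteGraph (Fin t) (Fin t))
      ≤ 2 * (2 * k) * (4 ^ (2 * k) * (2 * (t * (27 * 2 ^ (t - k))))) +
          4 * t ^ 2 * (2 * (t * (27 * 2 ^ (t - k)))) := by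
        refine onlineRamsey_completeBipartiteGraph_le (by omega) (by nlinarith)
          (natFloor_add_natFloor_le (hLk.trans (by exact_mod_cast (by omega : k ≤ t)))) ?_ ?_
        · rw [mul_assoc]
          gcongr
          exact choose_four_mul_sq_le (by rwa [abs_neg]) hlin hsq (Nat.sub_le _ _)
            (.inr (neg_nonpos.2 hL0)) hred.le
        · rw [mul_assoc]
          gcongr
          exact choose_four_mul_sq_le hLk hlin hsq le_rfl (.inl rfl) hblue.le
    _ = 216 * (k * 16 ^ k + t ^ 2) * t * 2 ^ (t - k) := by rw [pow_mul 4]; ring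
    _ ≤ 216 * (t ^ 2 + t ^ 2) * t * 2 ^ (t - k) := by gcongr
    _ = 432 * t ^ 3 * 2 ^ (t - k) := by ring

theorem exists_four_pow_le_sqrt_le (ht : 2 ≤ t) :
    ∃ k, 4 ^ k ≤ t ∧ k * 16 ^ k ≤ t ^ 2 ∧ √(t : ℝ) ≤ 2 ^ (k + 1) * √(Real.logb 2 t) := by
  set l := Nat.log 2 t
  have hl : 1 ≤ l := Nat.log_pos one_lt_two ht
  set k := Nat.log 4 (t / l)
  have hkl : k ≤ l := (Nat.log_anti_left one_lt_two (by norm_num)).trans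
    (Nat.log_mono_right (Nat.div_le_self t l))
  have htl : t / l ≠ 0 := (Nat.div_pos (Nat.log_le_self 2 t) hl).ne'
  have hlower : 4 ^ k * l ≤ t := (Nat.le_div_iff_mul_le hl).1 (Nat.pow_log_le_self 4 htl)
  have hupper : t < 4 ^ (k + 1) * l :=
    (Nat.div_lt_iff_lt_mul hl).1 (Nat.lt_pow_succ_log_self (by norm_num) _)
  have hlogb : (l : ℝ) ≤ Real.logb 2 t := Real.natLog_le_logb t 2
  refine ⟨k, (Nat.le_mul_of_pos_right _ hl).trans hlower, ?_, ?_⟩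
  · calc k * 16 ^ k ≤ l ^ 2 * 16 ^ k := by gcongr; nlinarith
      _ = (4 ^ k * l) ^ 2 := by rw [mul_pow, ← pow_mul, mul_comm k, pow_mul, mul_comm]; norm_num
      _ ≤ t ^ 2 := by gcongr
  · rw [Real.sqrt_le_left (by positivity), mul_pow, Real.sq_sqrt (l.cast_nonneg.trans hlogb)]
    calc (t : ℝ) ≤ 4 ^ (k + 1) * l := by exact_mod_cast hupper.le
      _ ≤ 4 ^ (k + 1) * Real.logb 2 t := by gcongr
      _ = (2 ^ (k + 1)) ^ 2 * Real.logb 2 t := by rw [← pow_mul, mul_comm _ 2, pow_mul]; norm_num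

end Estimates

/-- There is `c > 0` with `r̃(K_{t,t}) ≤ c 2^t t^{5/2} (log₂ t)^{1/2}` for all `t ≥ 2`. -/
theorem online_ramsey_bipartite :
    ∃ c : ℝ, 0 < c ∧ ∀ t : ℕ, 2 ≤ t →
      (onlineRamsey 2 (completeBipartiteGraph (Fin t) (Fin t)) : ℝ) ≤
        c * 2 ^ t * (t : ℝ) ^ ((5 : ℝ) / 2) * (Real.logb 2 t) ^ ((1 : ℝ) / 2) := by
  refine ⟨864, by norm_num, fun t ht ↦ ?_⟩
  obtain ⟨k, hk, hcost, hsqrt⟩ := exists_four_pow_le_sqrt_le ht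
  have hkt : k ≤ t := (Nat.lt_pow_self (by norm_num)).le.trans hk
  have ht0 : (0 : ℝ) < t := by positivity
  have hcube : (t : ℝ) ^ 3 = t ^ ((5 : ℝ) / 2) * √t := by
    rw [Real.sqrt_eq_rpow, ← Real.rpow_add ht0]
    norm_num
  calc (onlineRamsey 2 (completeBipartiteGraph (Fin t) (Fin t)) : ℝ)
      ≤ 432 * t ^ 3 * 2 ^ (t - k) := by
        exact_mod_cast onlineRamsey_completeBipartiteGraph_le_of_four_pow_le ht hk hcost
    _ = 432 * 2 ^ (t - k) * t ^ ((5 : ℝ) / 2) * √t := by rw [hcube]; ring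
    _ ≤ 432 * 2 ^ (t - k) * t ^ ((5 : ℝ) / 2) * (2 ^ (k + 1) * √(Real.logb 2 t)) := by gcongr
    _ = 864 * 2 ^ (t - k + k) * t ^ ((5 : ℝ) / 2) * √(Real.logb 2 t) := by ring
    _ = 864 * 2 ^ t * t ^ ((5 : ℝ) / 2) * (Real.logb 2 t) ^ ((1 : ℝ) / 2) := by
      rw [Nat.sub_add_cancel hkt, Real.sqrt_eq_rpow]
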